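/- arXiv:math/9607205 — 2 statements merged into one kernel-verified Lean document; each statement's English description precedes it below -/
import Mathlib

section
/- Let X and E be real normed spaces, e : ℕ → X and u : ℕ → E sequences, and assume: (i) u is spreading, i.e. for every strictly increasing ψ : ℕ → ℕ and every finitely supported a : ℕ → ℝ, ‖∑_i a_i u_{ψ(i)}‖ = ‖∑_i a_i u_i‖; (ii) no subsequence of e dominates u, i.e. for every strictly increasing φ : ℕ → ℕ and every C > 0 there exists a finitely supported a : ℕ → ℝ with ‖∑_i a_i u_i‖ > C ‖∑_i a_i e_{φ(i)}‖. Let (A_m)_{m∈ℕ} be a partition of ℕ into pairwise disjoint nonempty finite sets whose union is ℕ. Then for every D > 0 there exists M ∈ ℕ such that: for every set K ⊆ ℕ satisfying |K ∩ A_m| = 1 for all m < M, there exists a finitely supported a : ℕ → ℝ whose support is contained in K ∩ (A_0 ∪ … ∪ A_{M−1}) such that ‖∑_{k} a_k u_k‖ > D ‖∑_{k} a_k e_k‖. -/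
/-- Compactness observation at the start of the proof of Proposition I:
if `u` is spreading and no subsequence of `e` dominates `u`, then for any
partition of `ℕ` into disjoint nonempty finite sets `A m` and any `D > 0`
there is `M` such that for every selection set `K` meeting each `A m`
(`m < M`) in exactly one point, some finitely supported `a` supported in
`K ∩ (A 0 ∪ … ∪ A (M-1))` witnesses `‖∑ a_k u_k‖ > D ‖∑ a_k e_k‖`. -/
theorem selection_not_dominating_of_no_subseq_dominates
    {X E : Type*} [NormedAddCommGroup X] [NormedSpace ℝ X]
    [NormedAddCommGroup E] [NormedSpace ℝ E]
    (e : ℕ → X) (u : ℕ → E)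
    (hspread : ∀ ψ : ℕ → ℕ, StrictMono ψ → ∀ a : ℕ →₀ ℝ,
      ‖∑ i ∈ a.support, a i • u (ψ i)‖ = ‖∑ i ∈ a.support, a i • u i‖)
    (hnodom : ∀ φ : ℕ → ℕ, StrictMono φ → ∀ C : ℝ, 0 < C →
      ∃ a : ℕ →₀ ℝ,
        ‖∑ i ∈ a.support, a i • u i‖ > C * ‖∑ i ∈ a.support, a i • e (φ i)‖)
    (A : ℕ → Finset ℕ)
    (hA_nonempty : ∀ m, (A m).Nonempty)
    (hA_disjoint : ∀ m m', m ≠ m' → Disjoint (A m) (A m'))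
    (hA_cover : ∀ n : ℕ, ∃ m, n ∈ A m) :
    ∀ D : ℝ, 0 < D → ∃ M : ℕ,
      ∀ K : Set ℕ, (∀ m < M, ∃! k, k ∈ K ∧ k ∈ A m) →
        ∃ a : ℕ →₀ ℝ,
          (∀ k ∈ a.support, k ∈ K ∧ ∃ m < M, k ∈ A m) ∧
          ‖∑ k ∈ a.support, a k • u k‖ > D * ‖∑ k ∈ a.support, a k • e k‖ := by
  intro D hD
  classical
  let U : ℕ → Set ((m : ℕ) → A m) := fun M =>
    {f | ∃ a : ℕ →₀ ℝ, (∀ k ∈ a.support, ∃ m < M, (f m : ℕ) = k) ∧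
      ‖∑ k ∈ a.support, a k • u k‖ > D * ‖∑ k ∈ a.support, a k • e k‖}
  have hUo : ∀ M, IsOpen (U M) := by
    intro M
    have hU : U M = ⋃ a : ℕ →₀ ℝ, ⋃ _ : ‖∑ k ∈ a.support, a k • u k‖ >
        D * ‖∑ k ∈ a.support, a k • e k‖, ⋂ k ∈ a.support, ⋃ m : ℕ, ⋃ _ : m < M,
          (fun f : (m : ℕ) → A m => f m) ⁻¹' {x | (x : ℕ) = k} := by
      ext f
      simp only [U, Set.mem_ofPred_eq, Set.mem_iUnion, Set.mem_iInter, Set.mem_preimage,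
        exists_prop]
      exact exists_congr fun a => and_comm
    rw [hU]
    refine isOpen_iUnion fun a => isOpen_iUnion fun _ => isOpen_biInter_finset fun k _ =>
      isOpen_iUnion fun m => isOpen_iUnion fun _ => ?_
    exact (isOpen_discrete _).preimage (continuous_apply m)
  have hmono : Monotone U := by
    rintro M N hMN f ⟨a, ha, h⟩
    refine ⟨a, fun k hk => ?_, h⟩
    obtain ⟨m, hm, h'⟩ := ha k hk
    exact ⟨m, hm.trans_le hMN, h'⟩
  have hcov : (Set.univ : Set ((m : ℕ) → A m)) ⊆ ⋃ M, U M := by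
    intro f _
    have hinj : Function.Injective (fun m => (f m : ℕ)) := by
      intro m m' h
      by_contra hne
      have h1 := (f m).2
      have h2 := (f m').2
      simp only at h
      rw [← h] at h2
      exact Finset.disjoint_left.1 (hA_disjoint m m' hne) h1 h2
    have hinf := Set.infinite_range_of_injective hinj
    set S := Set.range (fun m => (f m : ℕ)) with hS
    let φ : ℕ → ℕ := Nat.nth (· ∈ S)
    have hφ : StrictMono φ := Nat.nth_strictMono hinf
    have hφm : ∀ i, ∃ m, (f m : ℕ) = φ i := fun i => Nat.nth_mem_of_infinite hinf i
    choose g hg using hφm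
    obtain ⟨a, ha⟩ := hnodom φ hφ D hD
    rw [Set.mem_iUnion]
    refine ⟨a.support.sup g + 1, a.embDomain ⟨φ, hφ.injective⟩, ?_, ?_⟩
    · intro k hk
      rw [Finsupp.support_embDomain, Finset.mem_map] at hk
      obtain ⟨i, hi, rfl⟩ := hk
      exact ⟨g i, Nat.lt_succ_of_le (Finset.le_sup hi), hg i⟩
    · rw [Finsupp.support_embDomain, Finset.sum_map, Finset.sum_map]
      simp only [Finsupp.embDomain_apply_self]
      simp only [Function.Embedding.coeFn_mk]
      rw [hspread φ hφ a]
      exact ha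
  obtain ⟨M, hM⟩ := isCompact_univ.elim_directed_cover U hUo hcov hmono.directed_le
  refine ⟨M, fun K hK => ?_⟩
  have hsel : ∀ m, ∃ x : A m, m < M → (x : ℕ) ∈ K := by
    intro m
    by_cases hm : m < M
    · obtain ⟨k, ⟨h1, h2⟩, _⟩ := hK m hm
      exact ⟨⟨k, h2⟩, fun _ => h1⟩
    · obtain ⟨k, hk⟩ := hA_nonempty m
      exact ⟨⟨k, hk⟩, fun h => absurd h hm⟩
  choose f hf using hsel
  obtain ⟨a, ha, h⟩ := hM (Set.mem_univ f)
  refine ⟨a, fun k hk => ?_, h⟩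
  obtain ⟨m, hm, rfl⟩ := ha k hk
  exact ⟨hf m hm, m, hm, (f m).2⟩
end

section
/- Let X and E be real normed spaces, e : ℕ → X and u : ℕ → E sequences, and assume: (i) u is spreading, i.e. for every strictly increasing ψ : ℕ → ℕ and every finitely supported a : ℕ → ℝ, ‖∑_i a_i u_{ψ(i)}‖ = ‖∑_i a_i u_i‖; (ii) no subsequence of e is dominated by u, i.e. for every strictly increasing φ : ℕ → ℕ and every C > 0 there exists a finitely supported a : ℕ → ℝ with ‖∑_i a_i e_{φ(i)}‖ > C ‖∑_i a_i u_i‖. Let (A_m)_{m∈ℕ} be a partition of ℕ into pairwise disjoint nonempty finite sets whose union is ℕ. Then for every D > 0 there exists M ∈ ℕ such that: for every set K ⊆ ℕ satisfying |K ∩ A_m| = 1 for all m < M, there exists a finitely supported a : ℕ → ℝ whose support is contained in K ∩ (A_0 ∪ … ∪ A_{M−1}) such that ‖∑_{k} a_k e_k‖ > D ‖∑_{k} a_k u_k‖. -/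
/-- The 'respectively' version of the compactness observation at the start of
the proof of Proposition I: if `u` is spreading and no subsequence of `e` is
dominated by `u`, then for any partition of `ℕ` into disjoint nonempty finite
sets `A m` and any `D > 0` there is `M` such that for every selection set `K`
meeting each `A m` (`m < M`) in exactly one point, some finitely supported `a`
supported in `K ∩ (A 0 ∪ … ∪ A (M-1))` witnesses
`‖∑ a_k e_k‖ > D ‖∑ a_k u_k‖`. -/
theorem selection_not_dominated_of_no_subseq_dominated
    {X E : Type*} [NormedAddCommGroup X] [NormedSpace ℝ X]
    [NormedAddCommGroup E] [NormedSpace ℝ E]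
    (e : ℕ → X) (u : ℕ → E)
    (hspread : ∀ ψ : ℕ → ℕ, StrictMono ψ → ∀ a : ℕ →₀ ℝ,
      ‖∑ i ∈ a.support, a i • u (ψ i)‖ = ‖∑ i ∈ a.support, a i • u i‖)
    (hnodom : ∀ φ : ℕ → ℕ, StrictMono φ → ∀ C : ℝ, 0 < C →
      ∃ a : ℕ →₀ ℝ,
        ‖∑ i ∈ a.support, a i • e (φ i)‖ > C * ‖∑ i ∈ a.support, a i • u i‖)
    (A : ℕ → Finset ℕ)
    (hA_nonempty : ∀ m, (A m).Nonempty)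
    (hA_disjoint : ∀ m m', m ≠ m' → Disjoint (A m) (A m'))
    (hA_cover : ∀ n : ℕ, ∃ m, n ∈ A m) :
    ∀ D : ℝ, 0 < D → ∃ M : ℕ,
      ∀ K : Set ℕ, (∀ m < M, ∃! k, k ∈ K ∧ k ∈ A m) →
        ∃ a : ℕ →₀ ℝ,
          (∀ k ∈ a.support, k ∈ K ∧ ∃ m < M, k ∈ A m) ∧
          ‖∑ k ∈ a.support, a k • e k‖ > D * ‖∑ k ∈ a.support, a k • u k‖ := by
  intro D hD
  by_contra hcon
  push Not at hcon
  choose Kf hK hbad using hcon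
  let U : Ultrafilter ℕ := Filter.hyperfilter ℕ
  have hU : (U : Filter ℕ) ≤ Filter.atTop := by
    rw [← Nat.cofinite_eq_atTop]
    exact Filter.hyperfilter_le_cofinite
  have hgt : ∀ m : ℕ, ∀ᶠ M in (U : Filter ℕ), m < M := fun m =>
    hU (Filter.eventually_gt_atTop m)
  let K : Set ℕ := {k | ∀ᶠ M in (U : Filter ℕ), k ∈ Kf M}
  have hex : ∀ m, ∃ k, k ∈ A m ∧ k ∈ K := by
    intro m
    by_contra hno
    push Not at hno
    have h1 : ∀ k ∈ A m, ∀ᶠ M in (U : Filter ℕ), k ∉ Kf M := by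
      intro k hk
      exact Ultrafilter.eventually_not.2 (hno k hk)
    have h2 : ∀ᶠ M in (U : Filter ℕ), ∀ k ∈ A m, k ∉ Kf M :=
      (Filter.eventually_all_finset (A m)).2 h1
    obtain ⟨M, hM1, hM2⟩ := (h2.and (hgt m)).exists
    obtain ⟨k, ⟨hk1, hk2⟩, -⟩ := hK M m hM2
    exact hM1 k hk2 hk1
  choose κ hκA hκK using hex
  have hinj : Function.Injective κ := by
    intro m m' h
    by_contra hne
    exact Finset.disjoint_left.1 (hA_disjoint m m' hne) (hκA m) (h ▸ hκA m')
  have hKinf : K.Infinite := Set.infinite_of_injective_forall_mem hinj hκK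
  have hφ : StrictMono (Nat.nth (· ∈ K)) := Nat.nth_strictMono hKinf
  have hφK : ∀ n, Nat.nth (· ∈ K) n ∈ K := fun n => Nat.nth_mem_of_infinite hKinf n
  generalize Nat.nth (· ∈ K) = φ at hφ hφK
  obtain ⟨a, ha⟩ := hnodom φ hφ D hD
  choose idx hidx using hA_cover
  have hev : ∀ᶠ M in (U : Filter ℕ), ∀ i ∈ a.support, φ i ∈ Kf M ∧ idx (φ i) < M :=
    (Filter.eventually_all_finset a.support).2 fun i _ => (hφK i).and (hgt _)
  obtain ⟨M, hM⟩ := hev.exists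
  let b : ℕ →₀ ℝ := a.embDomain ⟨φ, hφ.injective⟩
  have hb1 : ∑ k ∈ b.support, b k • e k = ∑ i ∈ a.support, a i • e (φ i) :=
    Finsupp.sum_embDomain (f := ⟨φ, hφ.injective⟩) (v := a) (g := fun k r => r • e k)
  have hb2 : ∑ k ∈ b.support, b k • u k = ∑ i ∈ a.support, a i • u (φ i) :=
    Finsupp.sum_embDomain (f := ⟨φ, hφ.injective⟩) (v := a) (g := fun k r => r • u k)
  have := hbad M b (by
    intro k hk
    rw [Finsupp.support_embDomain, Finset.mem_map] at hk
    obtain ⟨i, hi, rfl⟩ := hk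
    exact ⟨(hM i hi).1, _, (hM i hi).2, hidx _⟩)
  rw [hb1, hb2, hspread φ hφ a] at this
  exact absurd this (not_le.2 ha)
end
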